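/- (Orders of the striction curve of a developable surface; core of the topological classification.) Assume in addition that κ₁(s) = 0 for all s ∈ I (developable case). Let s₀ ∈ I, let m ≥ 1 and r ≥ 1 be integers, and suppose τ₁ vanishes to order exactly m−1 at s₀ (τ₁^{(k)}(s₀) = 0 for 0 ≤ k ≤ m−2, and τ₁^{(m−1)}(s₀) ≠ 0) and τ₀ vanishes to order exactly r−1 at s₀ (τ₀^{(k)}(s₀) = 0 for 0 ≤ k ≤ r−2, and τ₀^{(r−1)}(s₀) ≠ 0). Then the numbers A_k = ⟪σ^{(k)}(s₀), v₀(s₀)⟫, B_k = ⟪σ^{(k)}(s₀), n₀(s₀)⟫, C_k = ⟪σ^{(k)}(s₀), t₀(s₀)⟫ satisfy: A_k = 0 for 1 ≤ k ≤ m−1 and A_m ≠ 0; B_k = 0 for 1 ≤ k ≤ m and B_{m+1} ≠ 0; and C_k = 0 for 1 ≤ k ≤ m+r and C_{m+1+r} ≠ 0. (Hence the germ of the striction curve σ at s₀ is a space curve of type (m, m+1, m+1+r).) -/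

import Mathlib

noncomputable section
open scoped RealInnerProductSpace

/-- Euclidean 3-space `ℝ³`. -/
abbrev E3 : Type := EuclideanSpace ℝ (Fin 3)

/-- The cross product on `E3`. -/
def cross (u v : E3) : E3 :=
  (WithLp.equiv 2 (Fin 3 → ℝ)).symm
    ![u 1 * v 2 - u 2 * v 1, u 2 * v 0 - u 0 * v 2, u 0 * v 1 - u 1 * v 0]

/-- Determinant of the 3×3 matrix with columns `u`, `v`, `w`. -/
def det3 (u v w : E3) : ℝ :=
  Matrix.det !![u 0, v 0, w 0; u 1, v 1, w 1; u 2, v 2, w 2]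

namespace Ruled

/-- The director curve `e = v₀`. -/
def e (v₀ : ℝ → E3) : ℝ → E3 := v₀

/-- The base curve `r = v₀ × v₁`. -/
def r (v₀ v₁ : ℝ → E3) : ℝ → E3 := fun s => cross (v₀ s) (v₁ s)

/-- The parametrization `F(s,t) = r(s) + t • e(s)` of the ruled surface. -/
def F (v₀ v₁ : ℝ → E3) (s t : ℝ) : E3 := r v₀ v₁ s + t • v₀ s

/-- `n₀ = v₀'`. -/
def n₀ (v₀ : ℝ → E3) : ℝ → E3 := fun s => deriv v₀ s

/-- `κ₁ = ⟪v₀', v₁'⟫`, the ε-part of the dual curvature. -/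
def κ₁ (v₀ v₁ : ℝ → E3) : ℝ → ℝ := fun s => ⟪deriv v₀ s, deriv v₁ s⟫

/-- `n₁ = v₁' - κ₁ • v₀'`. -/
def n₁ (v₀ v₁ : ℝ → E3) : ℝ → E3 := fun s => deriv v₁ s - κ₁ v₀ v₁ s • deriv v₀ s

/-- `t₀ = v₀ × n₀`. -/
def t₀ (v₀ : ℝ → E3) : ℝ → E3 := fun s => cross (v₀ s) (n₀ v₀ s)

/-- `t₁ = v₀ × n₁ + v₁ × n₀`. -/
def t₁ (v₀ v₁ : ℝ → E3) : ℝ → E3 :=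
  fun s => cross (v₀ s) (n₁ v₀ v₁ s) + cross (v₁ s) (n₀ v₀ s)

/-- `τ₀ = ⟪n₀', t₀⟫`, the real part of the dual torsion. -/
def τ₀ (v₀ : ℝ → E3) : ℝ → ℝ := fun s => ⟪deriv (n₀ v₀) s, t₀ v₀ s⟫

/-- `τ₁ = ⟪n₀', t₁⟫ + ⟪n₁', t₀⟫`, the ε-part of the dual torsion. -/
def τ₁ (v₀ v₁ : ℝ → E3) : ℝ → ℝ :=
  fun s => ⟪deriv (n₀ v₀) s, t₁ v₀ v₁ s⟫ + ⟪deriv (n₁ v₀ v₁) s, t₀ v₀ s⟫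

/-- The striction curve `σ(s) = r(s) - ⟪r'(s), e'(s)⟫ • e(s)`. -/
def strict (v₀ v₁ : ℝ → E3) : ℝ → E3 :=
  fun s => r v₀ v₁ s - ⟪deriv (r v₀ v₁) s, deriv (e v₀) s⟫ • e v₀ s

end Ruled

open Ruled

theorem in3 (a b : E3) : ⟪a, b⟫ = a 0 * b 0 + a 1 * b 1 + a 2 * b 2 := by
  simp [PiLp.inner_apply, Fin.sum_univ_three]; ring

theorem bac (a b c : E3) : cross a (cross b c) = ⟪a, c⟫ • b - ⟪a, b⟫ • c := by
  ext i; fin_cases i <;> simp [cross, in3] <;> ring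

theorem cross_self' (a : E3) : cross a a = 0 := by
  ext i; fin_cases i <;> simp [cross] <;> ring

theorem cross_anti (a b : E3) : cross a b = - cross b a := by
  ext i; fin_cases i <;> simp [cross] <;> ring

theorem gram (u n : E3) :
    ⟪cross u n, cross u n⟫ = ⟪u, u⟫ * ⟪n, n⟫ - ⟪u, n⟫ ^ 2 := by
  rw [in3, in3, in3, in3]; simp [cross]; ring

theorem hd_val {f : ℝ → E3} {a b : E3} {s : ℝ} (h : HasDerivAt f a s) (e : a = b) :
    HasDerivAt f b s := e ▸ h

/-- bundled cross product -/
def crossL : E3 →L[ℝ] E3 →L[ℝ] E3 :=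
  (LinearMap.mk₂ ℝ cross
    (by intro a b c; ext i; fin_cases i <;> simp [cross] <;> ring)
    (by intro a b c; ext i; fin_cases i <;> simp [cross] <;> ring)
    (by intro a b c; ext i; fin_cases i <;> simp [cross] <;> ring)
    (by intro a b c; ext i; fin_cases i <;> simp [cross] <;> ring)).toContinuousBilinearMap

theorem crossL_apply (a b : E3) : crossL a b = cross a b := rfl

theorem cross_add_right (a b c : E3) : cross a (b + c) = cross a b + cross a c := by
  simp only [← crossL_apply, map_add]

theorem cross_smul_right (x : ℝ) (a b : E3) : cross a (x • b) = x • cross a b := by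
  simp only [← crossL_apply, map_smul]

theorem cross_deriv {f g : ℝ → E3} {f' g' : E3} {s : ℝ} (hf : HasDerivAt f f' s)
    (hg : HasDerivAt g g' s) :
    HasDerivAt (fun x => cross (f x) (g x)) (cross (f s) g' + cross f' (g s)) s :=
  ContinuousLinearMap.hasDerivAt_of_bilinear (B := crossL) (fun _ => hf) (fun _ => hg)

theorem cross_smooth {f g : ℝ → E3} {I : Set ℝ} (hf : ContDiffOn ℝ (⊤ : ℕ∞) f I)
    (hg : ContDiffOn ℝ (⊤ : ℕ∞) g I) :
    ContDiffOn ℝ (⊤ : ℕ∞) (fun x => cross (f x) (g x)) I := by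
  have := (crossL.contDiff.comp_contDiffOn hf).clm_apply hg
  exact this

theorem frame_exp (u n x : E3) (hu : ⟪u, u⟫ = 1) (hn : ⟪n, n⟫ = 1) (hun : ⟪u, n⟫ = 0) :
    x = ⟪x, u⟫ • u + ⟪x, n⟫ • n + ⟪x, cross u n⟫ • cross u n := by
  have h1 := bac (cross u n) x (cross u n)
  have h2 := bac x u n
  have h3 : cross n (cross u n) = u := by
    rw [bac, hn, real_inner_comm, hun]; simp
  have h4 : cross u (cross u n) = -n := by
    rw [bac, hun, hu]; simp
  have h5 : ⟪cross u n, cross u n⟫ = 1 := by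
    rw [gram, hu, hn, hun]; norm_num
  rw [h2, h5, sub_eq_add_neg, ← neg_smul, cross_add_right, cross_smul_right, cross_smul_right,
    cross_anti (cross u n) u, cross_anti (cross u n) n, h3, h4, one_smul] at h1
  rw [eq_sub_iff_add_eq] at h1
  rw [real_inner_comm (cross u n) x]
  refine h1.symm.trans ?_
  module

/-- exact vanishing order -/
def VOrd (f : ℝ → ℝ) (n : ℕ) (s : ℝ) : Prop :=
  (∀ k < n, iteratedDeriv k f s = 0) ∧ iteratedDeriv n f s ≠ 0

theorem VOrd.mul {f g : ℝ → ℝ} {a b : ℕ} {s : ℝ} (hf : ContDiffAt ℝ (⊤ : ℕ∞) f s)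
    (hg : ContDiffAt ℝ (⊤ : ℕ∞) g s) (ha : VOrd f a s) (hb : VOrd g b s) :
    VOrd (f * g) (a + b) s := by
  have key : ∀ n : ℕ, iteratedDeriv n (f * g) s = ∑ i ∈ Finset.range (n + 1),
      ↑(n.choose i) * iteratedDeriv i f s * iteratedDeriv (n - i) g s := fun n =>
    iteratedDeriv_mul (hf.of_le (by exact_mod_cast le_top)) (hg.of_le (by exact_mod_cast le_top))
  constructor
  · intro k hk
    rw [key]
    apply Finset.sum_eq_zero
    intro i hi
    rw [Finset.mem_range] at hi
    rcases lt_or_ge i a with h | h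
    · rw [ha.1 i h]; simp
    · rw [hb.1 (k - i) (by omega)]; simp
  · rw [key, Finset.sum_eq_single a]
    · rw [Nat.add_sub_cancel_left]
      refine mul_ne_zero (mul_ne_zero ?_ ha.2) hb.2
      exact_mod_cast (Nat.choose_pos (by omega)).ne'
    · intro i hi hia
      rw [Finset.mem_range] at hi
      rcases lt_or_ge i a with h | h
      · rw [ha.1 i h]; simp
      · rw [hb.1 (a + b - i) (by omega)]; simp
    · intro h; exact absurd (Finset.mem_range.2 (by omega)) h

theorem iter_inner {f : ℝ → E3} {s : ℝ} (hf : ContDiffAt ℝ (⊤ : ℕ∞) f s) (w : E3) (k : ℕ) :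
    ⟪iteratedDeriv k f s, w⟫ = iteratedDeriv k (fun x => ⟪f x, w⟫) s := by
  have h := ContinuousLinearMap.iteratedFDeriv_comp_left (innerSL ℝ w) hf (i := k)
    (by exact_mod_cast le_top)
  have e : (fun x => ⟪f x, w⟫) = (innerSL ℝ w) ∘ f := by
    ext x; simp [real_inner_comm]
  rw [e, iteratedDeriv, iteratedDeriv, h]
  simp [real_inner_comm]

/-- Main local structure equations. -/
theorem structure_eqs
    (I : Set ℝ) (v₀ v₁ : ℝ → E3) (hI : IsOpen I)
    (hv₀ : ContDiffOn ℝ (⊤ : ℕ∞) v₀ I) (hv₁ : ContDiffOn ℝ (⊤ : ℕ∞) v₁ I)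
    (hunit : ∀ s ∈ I, ‖v₀ s‖ = 1) (horth : ∀ s ∈ I, ⟪v₀ s, v₁ s⟫ = 0)
    (harc : ∀ s ∈ I, ‖deriv v₀ s‖ = 1)
    (hdev : ∀ s ∈ I, κ₁ v₀ v₁ s = 0) :
    ContDiffOn ℝ (⊤ : ℕ∞) (n₀ v₀) I ∧ ContDiffOn ℝ (⊤ : ℕ∞) (t₀ v₀) I ∧
    ContDiffOn ℝ (⊤ : ℕ∞) (τ₀ v₀) I ∧ ContDiffOn ℝ (⊤ : ℕ∞) (τ₁ v₀ v₁) I ∧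
    ContDiffOn ℝ (⊤ : ℕ∞) (strict v₀ v₁) I ∧
    ∀ s ∈ I, ⟪v₀ s, v₀ s⟫ = 1 ∧ ⟪n₀ v₀ s, n₀ v₀ s⟫ = 1 ∧ ⟪t₀ v₀ s, t₀ v₀ s⟫ = 1 ∧
      ⟪v₀ s, n₀ v₀ s⟫ = 0 ∧ ⟪v₀ s, t₀ v₀ s⟫ = 0 ∧ ⟪n₀ v₀ s, t₀ v₀ s⟫ = 0 ∧
      HasDerivAt v₀ (n₀ v₀ s) s ∧ HasDerivAt (n₀ v₀) (- v₀ s + τ₀ v₀ s • t₀ v₀ s) s ∧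
      HasDerivAt (strict v₀ v₁) (τ₁ v₀ v₁ s • v₀ s) s := by
  have smd : ∀ {f : ℝ → E3}, ContDiffOn ℝ (⊤ : ℕ∞) f I → ContDiffOn ℝ (⊤ : ℕ∞) (deriv f) I :=
    fun h => h.deriv_of_isOpen hI (by simp)
  have hd : ∀ {f : ℝ → E3}, ContDiffOn ℝ (⊤ : ℕ∞) f I → ∀ s ∈ I, HasDerivAt f (deriv f s) s :=
    fun h s hs => ((h.contDiffAt (hI.mem_nhds hs)).differentiableAt (by simp)).hasDerivAt
  have cst : ∀ {f : ℝ → ℝ} {f' c : ℝ}, (∀ s ∈ I, f s = c) → ∀ s ∈ I, HasDerivAt f f' s → f' = 0 := by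
    intro f f' c h s hs hf
    have : f =ᶠ[nhds s] fun _ => c := Filter.eventuallyEq_of_mem (hI.mem_nhds hs) h
    exact (hf.congr_of_eventuallyEq this.symm).unique (hasDerivAt_const s c)
  have sn : ContDiffOn ℝ (⊤ : ℕ∞) (n₀ v₀) I := smd hv₀
  have st : ContDiffOn ℝ (⊤ : ℕ∞) (t₀ v₀) I := cross_smooth hv₀ sn
  have sr : ContDiffOn ℝ (⊤ : ℕ∞) (r v₀ v₁) I := cross_smooth hv₀ hv₁
  have sκ : ContDiffOn ℝ (⊤ : ℕ∞) (κ₁ v₀ v₁) I := (smd hv₀).inner ℝ (smd hv₁)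
  have sn1 : ContDiffOn ℝ (⊤ : ℕ∞) (n₁ v₀ v₁) I := (smd hv₁).sub (sκ.smul (smd hv₀))
  have st1 : ContDiffOn ℝ (⊤ : ℕ∞) (t₁ v₀ v₁) I :=
    (cross_smooth hv₀ sn1).add (cross_smooth hv₁ sn)
  have sτ0 : ContDiffOn ℝ (⊤ : ℕ∞) (τ₀ v₀) I := (smd sn).inner ℝ st
  have sτ1 : ContDiffOn ℝ (⊤ : ℕ∞) (τ₁ v₀ v₁) I := ((smd sn).inner ℝ st1).add ((smd sn1).inner ℝ st)
  have ss : ContDiffOn ℝ (⊤ : ℕ∞) (strict v₀ v₁) I :=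
    sr.sub (((smd sr).inner ℝ (smd hv₀)).smul hv₀)
  refine ⟨sn, st, sτ0, sτ1, ss, ?_⟩
  have uu : ∀ s ∈ I, ⟪v₀ s, v₀ s⟫ = 1 := fun s hs => by
    rw [real_inner_self_eq_norm_sq, hunit s hs]; norm_num
  have nn : ∀ s ∈ I, ⟪n₀ v₀ s, n₀ v₀ s⟫ = 1 := fun s hs => by
    rw [real_inner_self_eq_norm_sq, n₀, harc s hs]; norm_num
  have un : ∀ s ∈ I, ⟪v₀ s, n₀ v₀ s⟫ = 0 := fun s hs => by
    have := cst uu s hs ((hd hv₀ s hs).inner ℝ (hd hv₀ s hs))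
    rw [real_inner_comm (v₀ s) (deriv v₀ s)] at this
    rw [real_inner_comm] at this
    simp only [n₀]; rw [real_inner_comm]; linarith [real_inner_comm (v₀ s) (deriv v₀ s)]
  have nn' : ∀ s ∈ I, ⟪n₀ v₀ s, deriv (n₀ v₀) s⟫ = 0 := fun s hs => by
    have := cst nn s hs ((hd sn s hs).inner ℝ (hd sn s hs))
    linarith [real_inner_comm (n₀ v₀ s) (deriv (n₀ v₀) s)]
  have un' : ∀ s ∈ I, ⟪v₀ s, deriv (n₀ v₀) s⟫ = -1 := fun s hs => by
    have := cst un s hs ((hd hv₀ s hs).inner ℝ (hd sn s hs))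
    have h2 := nn s hs
    simp only [n₀] at h2 this ⊢
    linarith
  have tt : ∀ s ∈ I, ⟪t₀ v₀ s, t₀ v₀ s⟫ = 1 := fun s hs => by
    rw [t₀, gram, uu s hs, nn s hs, un s hs]; norm_num
  have ut : ∀ s, ⟪v₀ s, t₀ v₀ s⟫ = 0 := fun s => by simp [t₀, in3, cross]; ring
  have nt : ∀ s, ⟪n₀ v₀ s, t₀ v₀ s⟫ = 0 := fun s => by simp [t₀, in3, cross]; ring
  have exp : ∀ s ∈ I, ∀ x : E3, x = ⟪x, v₀ s⟫ • v₀ s + ⟪x, n₀ v₀ s⟫ • n₀ v₀ s +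
      ⟪x, t₀ v₀ s⟫ • t₀ v₀ s := fun s hs x => frame_exp _ _ x (uu s hs) (nn s hs) (un s hs)
  have dn : ∀ s ∈ I, deriv (n₀ v₀) s = - v₀ s + τ₀ v₀ s • t₀ v₀ s := fun s hs => by
    have h := exp s hs (deriv (n₀ v₀) s)
    rw [real_inner_comm, un' s hs, real_inner_comm (n₀ v₀ s), nn' s hs] at h
    rw [h]; simp [τ₀]
  have cut : ∀ s ∈ I, cross (v₀ s) (t₀ v₀ s) = - n₀ v₀ s := fun s hs => by
    rw [t₀, bac, un s hs, uu s hs]; simp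
  have cnt : ∀ s ∈ I, cross (n₀ v₀ s) (t₀ v₀ s) = v₀ s := fun s hs => by
    rw [t₀, bac, nn s hs, real_inner_comm, un s hs]; simp
  have cun : ∀ s, cross (v₀ s) (n₀ v₀ s) = t₀ v₀ s := fun s => rfl
  have dt : ∀ s ∈ I, HasDerivAt (t₀ v₀) (- τ₀ v₀ s • n₀ v₀ s) s := fun s hs => by
    have h := cross_deriv (hd hv₀ s hs) (hd sn s hs)
    rw [dn s hs, cross_add_right, cross_smul_right, cut s hs] at h
    have h0 : cross (v₀ s) (- v₀ s) = 0 := by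
      rw [← neg_one_smul ℝ, cross_smul_right, cross_self', smul_zero]
    have h1 : cross (deriv v₀ s) (n₀ v₀ s) = 0 := cross_self' _
    rw [h0, h1] at h
    exact hd_val h (by simp [n₀])
  -- derivative of v₁
  have dv1 : ∀ s ∈ I, deriv v₁ s = -⟪v₁ s, n₀ v₀ s⟫ • v₀ s +
      ⟪deriv v₁ s, t₀ v₀ s⟫ • t₀ v₀ s := fun s hs => by
    have h := exp s hs (deriv v₁ s)
    have h1 := cst horth s hs ((hd hv₀ s hs).inner ℝ (hd hv₁ s hs))
    have h2 : ⟪deriv v₁ s, v₀ s⟫ = -⟪v₁ s, n₀ v₀ s⟫ := by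
      simp only [n₀]
      linarith [real_inner_comm (v₀ s) (deriv v₁ s), real_inner_comm (v₁ s) (deriv v₀ s)]
    have h3 : ⟪deriv v₁ s, n₀ v₀ s⟫ = 0 := by
      rw [real_inner_comm]; exact hdev s hs
    rw [h2, h3, zero_smul, add_zero] at h
    exact h
  have cuv : ∀ s ∈ I, cross (v₀ s) (deriv v₁ s) = - ⟪deriv v₁ s, t₀ v₀ s⟫ • n₀ v₀ s :=
    fun s hs => by
      conv_lhs => rw [dv1 s hs]
      rw [cross_add_right, cross_smul_right, cross_smul_right, cross_self', cut s hs]; simp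
  have cnv : ∀ s ∈ I, cross (n₀ v₀ s) (v₁ s) = ⟪v₁ s, t₀ v₀ s⟫ • v₀ s := fun s hs => by
    conv_lhs => rw [exp s hs (v₁ s)]
    rw [cross_add_right, cross_add_right, cross_smul_right, cross_smul_right, cross_smul_right,
      cross_self', cnt s hs, real_inner_comm, horth s hs]; simp
  have dr : ∀ s ∈ I, HasDerivAt (r v₀ v₁)
      (⟪v₁ s, t₀ v₀ s⟫ • v₀ s - ⟪deriv v₁ s, t₀ v₀ s⟫ • n₀ v₀ s) s := fun s hs => by
    have h := cross_deriv (hd hv₀ s hs) (hd hv₁ s hs)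
    have e2 := cnv s hs
    rw [n₀] at e2
    rw [e2, cuv s hs] at h
    exact hd_val h (by module)
  have hstr : ∀ s ∈ I, strict v₀ v₁ s = r v₀ v₁ s + ⟪deriv v₁ s, t₀ v₀ s⟫ • v₀ s :=
    fun s hs => by
      have : ⟪deriv (r v₀ v₁) s, deriv (e v₀) s⟫ = -⟪deriv v₁ s, t₀ v₀ s⟫ := by
        rw [(dr s hs).deriv]
        have h1 := un s hs
        have h2 := nn s hs
        simp only [n₀] at h1 h2 ⊢
        simp only [e]
        rw [inner_sub_left, inner_smul_left, inner_smul_left, h1, h2]; simp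
      rw [strict, this, e]; module
  have hn1 : ∀ s ∈ I, n₁ v₀ v₁ s = deriv v₁ s := fun s hs => by
    rw [n₁, hdev s hs]; simp
  have hdn1 : ∀ s ∈ I, deriv (n₁ v₀ v₁) s = deriv (deriv v₁) s := fun s hs =>
    (Filter.eventuallyEq_of_mem (hI.mem_nhds hs) hn1).deriv_eq
  have dc : ∀ s ∈ I, HasDerivAt (fun s => ⟪deriv v₁ s, t₀ v₀ s⟫)
      ⟪deriv (n₁ v₀ v₁) s, t₀ v₀ s⟫ s := fun s hs => by
    have h := (hd (smd hv₁) s hs).inner ℝ (dt s hs)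
    have h3 : ⟪deriv v₁ s, n₀ v₀ s⟫ = 0 := by
      rw [real_inner_comm]; exact hdev s hs
    rw [inner_smul_right, h3, mul_zero, zero_add, ← hdn1 s hs] at h
    exact h
  have hτ1 : ∀ s ∈ I, τ₁ v₀ v₁ s = ⟪v₁ s, t₀ v₀ s⟫ + ⟪deriv (n₁ v₀ v₁) s, t₀ v₀ s⟫ :=
    fun s hs => by
      rw [τ₁, t₁, hn1 s hs, cuv s hs, cross_anti (v₁ s), cnv s hs, inner_add_right,
        inner_neg_right, inner_smul_right, inner_smul_right, real_inner_comm (n₀ v₀ s),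
        nn' s hs, real_inner_comm (v₀ s), un' s hs]
      ring
  intro s hs
  refine ⟨uu s hs, nn s hs, tt s hs, un s hs, ut s, nt s, hd hv₀ s hs, ?_, ?_⟩
  · rw [← dn s hs]; exact hd sn s hs
  · have h := (dr s hs).add ((dc s hs).smul (hd hv₀ s hs))
    have h' := h.congr_of_eventuallyEq (Filter.eventuallyEq_of_mem (hI.mem_nhds hs) hstr)
    exact hd_val h' (by rw [hτ1 s hs]; simp only [n₀]; module)

/-- Orders of the striction curve of a developable surface: if `τ₁` vanishes to order
exactly `m - 1` and `τ₀` to order exactly `r' - 1` at `s₀`, then the frame components of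
the derivatives of the striction curve vanish exactly as for a space curve of type
`(m, m + 1, m + 1 + r')`. -/
theorem striction_curve_type
    (I : Set ℝ) (v₀ v₁ : ℝ → E3)
    (hI : IsOpen I) (hI' : I.OrdConnected)
    (hv₀ : ContDiffOn ℝ (⊤ : ℕ∞) v₀ I) (hv₁ : ContDiffOn ℝ (⊤ : ℕ∞) v₁ I)
    (hunit : ∀ s ∈ I, ‖v₀ s‖ = 1) (horth : ∀ s ∈ I, ⟪v₀ s, v₁ s⟫ = 0)
    (harc : ∀ s ∈ I, ‖deriv v₀ s‖ = 1)
    (hdev : ∀ s ∈ I, κ₁ v₀ v₁ s = 0)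
    (s₀ : ℝ) (hs₀ : s₀ ∈ I) (m r' : ℕ) (hm : 1 ≤ m) (hr : 1 ≤ r')
    (hτ₁zero : ∀ k < m - 1, iteratedDeriv k (τ₁ v₀ v₁) s₀ = 0)
    (hτ₁ne : iteratedDeriv (m - 1) (τ₁ v₀ v₁) s₀ ≠ 0)
    (hτ₀zero : ∀ k < r' - 1, iteratedDeriv k (τ₀ v₀) s₀ = 0)
    (hτ₀ne : iteratedDeriv (r' - 1) (τ₀ v₀) s₀ ≠ 0) :
    (∀ k : ℕ, 1 ≤ k → k ≤ m - 1 → ⟪iteratedDeriv k (strict v₀ v₁) s₀, v₀ s₀⟫ = 0) ∧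
    ⟪iteratedDeriv m (strict v₀ v₁) s₀, v₀ s₀⟫ ≠ 0 ∧
    (∀ k : ℕ, 1 ≤ k → k ≤ m → ⟪iteratedDeriv k (strict v₀ v₁) s₀, n₀ v₀ s₀⟫ = 0) ∧
    ⟪iteratedDeriv (m + 1) (strict v₀ v₁) s₀, n₀ v₀ s₀⟫ ≠ 0 ∧
    (∀ k : ℕ, 1 ≤ k → k ≤ m + r' → ⟪iteratedDeriv k (strict v₀ v₁) s₀, t₀ v₀ s₀⟫ = 0) ∧
    ⟪iteratedDeriv (m + 1 + r') (strict v₀ v₁) s₀, t₀ v₀ s₀⟫ ≠ 0 := by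
  obtain ⟨sn, st, sτ0, sτ1, ss, H⟩ := structure_eqs I v₀ v₁ hI hv₀ hv₁ hunit horth harc hdev
  have hnb := hI.mem_nhds hs₀
  obtain ⟨uu, nn, tt, un, ut, nt, -, -, -⟩ := H s₀ hs₀
  have o1 : VOrd (τ₁ v₀ v₁) (m - 1) s₀ := ⟨hτ₁zero, hτ₁ne⟩
  have o0 : VOrd (τ₀ v₀) (r' - 1) s₀ := ⟨hτ₀zero, hτ₀ne⟩
  have red : ∀ (w : E3) (k : ℕ), ⟪iteratedDeriv (k + 1) (strict v₀ v₁) s₀, w⟫ =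
      iteratedDeriv k (τ₁ v₀ v₁ * fun s => ⟪v₀ s, w⟫) s₀ := by
    intro w k
    have h1 : deriv (strict v₀ v₁) =ᶠ[nhds s₀] fun s => τ₁ v₀ v₁ s • v₀ s :=
      Filter.eventuallyEq_of_mem hnb fun s hs => (H s hs).2.2.2.2.2.2.2.2.deriv
    have h2 : ContDiffAt ℝ (⊤ : ℕ∞) (fun s => τ₁ v₀ v₁ s • v₀ s) s₀ :=
      (sτ1.smul hv₀).contDiffAt hnb
    rw [iteratedDeriv_succ', h1.iteratedDeriv_eq k, iter_inner h2 w k]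
    congr 1
    ext s
    simp [inner_smul_left]
  have sg : ∀ w : E3, ContDiffAt ℝ (⊤ : ℕ∞) (fun s => ⟪v₀ s, w⟫) s₀ := fun w =>
    (hv₀.contDiffAt hnb).inner ℝ contDiffAt_const
  have key : ∀ (w : E3) (b : ℕ), VOrd (fun s => ⟪v₀ s, w⟫) b s₀ →
      (∀ k : ℕ, 1 ≤ k → k ≤ m - 1 + b → ⟪iteratedDeriv k (strict v₀ v₁) s₀, w⟫ = 0) ∧
      ⟪iteratedDeriv (m + b) (strict v₀ v₁) s₀, w⟫ ≠ 0 := by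
    intro w b hb
    have ho := VOrd.mul (sτ1.contDiffAt hnb) (sg w) o1 hb
    constructor
    · intro k hk hk'
      obtain ⟨j, rfl⟩ : ∃ j, k = j + 1 := ⟨k - 1, by omega⟩
      rw [red]; exact ho.1 j (by omega)
    · rw [show m + b = (m - 1 + b) + 1 by omega, red]; exact ho.2
  have dg : ∀ w : E3, ∀ s ∈ I, deriv (fun s => ⟪v₀ s, w⟫) s = ⟪n₀ v₀ s, w⟫ := by
    intro w s hs
    have := ((H s hs).2.2.2.2.2.2.1.inner ℝ (hasDerivAt_const s w)).deriv
    simpa using this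
  have dg2 : ∀ w : E3, ∀ s ∈ I, deriv (fun s => ⟪n₀ v₀ s, w⟫) s =
      -⟪v₀ s, w⟫ + τ₀ v₀ s * ⟪t₀ v₀ s, w⟫ := by
    intro w s hs
    have := ((H s hs).2.2.2.2.2.2.2.1.inner ℝ (hasDerivAt_const s w)).deriv
    simpa [inner_add_left, inner_smul_left] using this
  have step1 : ∀ (w : E3) (k : ℕ), iteratedDeriv (k + 1) (fun s => ⟪v₀ s, w⟫) s₀ =
      iteratedDeriv k (fun s => ⟪n₀ v₀ s, w⟫) s₀ := fun w k => by
    rw [iteratedDeriv_succ']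
    exact (Filter.eventuallyEq_of_mem hnb (dg w)).iteratedDeriv_eq k
  have q0 : VOrd (fun s => ⟪v₀ s, v₀ s₀⟫) 0 s₀ := ⟨by simp, by rw [iteratedDeriv_zero, uu]; norm_num⟩
  have q1 : VOrd (fun s => ⟪v₀ s, n₀ v₀ s₀⟫) 1 s₀ := by
    constructor
    · intro k hk
      obtain rfl : k = 0 := by omega
      rw [iteratedDeriv_zero]; exact un
    · rw [step1 _ 0, iteratedDeriv_zero, nn]; norm_num
  have q2 : VOrd (fun s => ⟪v₀ s, t₀ v₀ s₀⟫) (r' + 1) s₀ := by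
    have oq : VOrd (fun s => ⟪t₀ v₀ s, t₀ v₀ s₀⟫) 0 s₀ :=
      ⟨by simp, by rw [iteratedDeriv_zero, tt]; norm_num⟩
    have sq : ContDiffAt ℝ (⊤ : ℕ∞) (fun s => ⟪t₀ v₀ s, t₀ v₀ s₀⟫) s₀ :=
      (st.contDiffAt hnb).inner ℝ contDiffAt_const
    have oτ := VOrd.mul (sτ0.contDiffAt hnb) sq o0 oq
    have sτq := (sτ0.contDiffAt hnb).mul sq
    have step2 : ∀ k : ℕ, iteratedDeriv (k + 2) (fun s => ⟪v₀ s, t₀ v₀ s₀⟫) s₀ =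
        - iteratedDeriv k (fun s => ⟪v₀ s, t₀ v₀ s₀⟫) s₀ +
        iteratedDeriv k (τ₀ v₀ * fun s => ⟪t₀ v₀ s, t₀ v₀ s₀⟫) s₀ := by
      intro k
      rw [show k + 2 = (k + 1) + 1 from rfl, step1, iteratedDeriv_succ',
        (Filter.eventuallyEq_of_mem hnb (dg2 (t₀ v₀ s₀))).iteratedDeriv_eq k, ← iteratedDeriv_neg]
      exact iteratedDeriv_add ((sg _).neg.of_le (by exact_mod_cast le_top))
        (sτq.of_le (by exact_mod_cast le_top))
    have hz : ∀ k < r' + 1, iteratedDeriv k (fun s => ⟪v₀ s, t₀ v₀ s₀⟫) s₀ = 0 := by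
      intro k
      induction k using Nat.strong_induction_on with
      | _ k ih =>
        intro hk
        match k with
        | 0 => rw [iteratedDeriv_zero]; exact ut
        | 1 => rw [step1 _ 0, iteratedDeriv_zero]; exact nt
        | j + 2 =>
          rw [step2, ih j (by omega) (by omega), oτ.1 j (by omega)]; simp
    refine ⟨hz, ?_⟩
    rw [show r' + 1 = (r' - 1) + 2 by omega, step2, hz _ (by omega)]
    simpa using oτ.2
  obtain ⟨a1, a2⟩ := key _ _ q0
  obtain ⟨b1, b2⟩ := key _ _ q1
  obtain ⟨c1, c2⟩ := key _ _ q2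
  refine ⟨a1, a2, fun k h h' => b1 k h (by omega), b2, fun k h h' => c1 k h (by omega), ?_⟩
  rw [show m + 1 + r' = m + (r' + 1) by omega]
  exact c2
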